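/- arXiv:1311.3354 — 3 statements merged into one kernel-verified Lean document; each statement's English description precedes it below -/
import Mathlib

section
/- Let b ≥ 2 be an integer and let s ∈ ℂ satisfy s^{2b} = 1. In the polynomial ring R = ℂ[u,v,x,y] define the 2×2 matrix d¹ = [[x − s²u², v + s·u·y], [v − s·u·y, (Σ_{i=0}^{b−1} x^i (s·u)^{2(b−1−i)}) + y²]]. Then det(d¹) = x^b + x·y² − u^{2b} − v². Consequently, setting d⁰ equal to the adjugate of d¹, the pair (d⁰, d¹) is a rank-two matrix factorisation of V^{(D_{b+1})}(x,y) − V^{(A_{2b−1})}(u,v) = x^b + x·y² − u^{2b} − v². Moreover, each entry of d¹ is weighted homogeneous for the weights w(u) = 1/b, w(v) = 1, w(x) = 2/b, w(y) = 1 − 1/b, the entries having degrees [[2/b, 1], [1, 2 − 2/b]] respectively. -/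
open MvPolynomial

noncomputable section

/-- The polynomial ring `R = ℂ[u,v,x,y]`. -/
abbrev R4 : Type := MvPolynomial (Fin 4) ℂ

def u : R4 := X 0
def v : R4 := X 1
def x : R4 := X 2
def y : R4 := X 3

/-- A polynomial is weighted homogeneous of degree `q` for the weights `w`. -/
def WHom (w : Fin 4 → ℚ) (q : ℚ) (p : R4) : Prop :=
  ∀ m ∈ p.support, (∑ i : Fin 4, (m i : ℚ) * w i) = q

/-- The matrix `d¹` of the D-type orbifold equivalence. -/
def dD (b : ℕ) (s : ℂ) : Matrix (Fin 2) (Fin 2) R4 :=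
  !![x - C s ^ 2 * u ^ 2, v + C s * u * y;
     v - C s * u * y, (∑ i ∈ Finset.range b, x ^ i * (C s * u) ^ (2 * (b - 1 - i))) + y ^ 2]

/-! With `t = s u` the determinant telescopes: the lower right entry contains the geometric sum of
`x` and `t ^ 2`, whose product with `x - t ^ 2` is `x ^ b - t ^ (2 * b)`, and the terms
`t ^ 2 * y ^ 2` cancel. The condition on `s` turns `t ^ (2 * b)` into `u ^ (2 * b)`. Every square
matrix and its adjugate factorise the determinant. Finally, in terms of the degree `a` of `u`, the
variables `v`, `x`, `y` have degrees `b • a`, `2 • a`, `(b - 1) • a`, so all summands of an entry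
have the same degree. -/

/-- The pair `(d₀, d₁)` is a matrix factorisation of `f`; its rank is the cardinality of the index
type `n`. -/
structure IsMatrixFactorisation {R n : Type*} [CommRing R] [Fintype n] [DecidableEq n]
    (f : R) (d₀ d₁ : Matrix n n R) : Prop where
  right_mul_left : d₁ * d₀ = f • (1 : Matrix n n R)
  left_mul_right : d₀ * d₁ = f • (1 : Matrix n n R)

lemma isMatrixFactorisation_adjugate {R n : Type*} [CommRing R] [Fintype n] [DecidableEq n]
    (d : Matrix n n R) : IsMatrixFactorisation d.det d.adjugate d :=
  ⟨d.mul_adjugate, d.adjugate_mul⟩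

/-- The matrix `d¹` of the D-type orbifold equivalence over an arbitrary commutative ring, with `t`
in the place of `s u`; the sum is arranged as a geometric sum in `x` and `t ^ 2`. -/
def orbifoldMatrix {R : Type*} [CommRing R] (b : ℕ) (t v x y : R) : Matrix (Fin 2) (Fin 2) R :=
  !![x - t ^ 2, v + t * y;
     v - t * y, (∑ i ∈ Finset.range b, x ^ i * (t ^ 2) ^ (b - 1 - i)) + y ^ 2]

lemma det_orbifoldMatrix {R : Type*} [CommRing R] (b : ℕ) (t v x y : R) :
    (orbifoldMatrix b t v x y).det = x ^ b + x * y ^ 2 - t ^ (2 * b) - v ^ 2 := by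
  rw [orbifoldMatrix, Matrix.det_fin_two_of, pow_mul t 2 b]
  linear_combination geom_sum₂_mul x (t ^ 2) b

lemma dD_eq_orbifoldMatrix (b : ℕ) (s : ℂ) : dD b s = orbifoldMatrix b (C s * u) v x y := by
  simp only [dD, orbifoldMatrix, mul_pow, pow_mul]

lemma isWeightedHomogeneous_geom_sum₂ {σ K M : Type*} [CommSemiring K] [AddCommMonoid M]
    {w : σ → M} {p q : MvPolynomial σ K} {a : M} (hp : IsWeightedHomogeneous w p a)
    (hq : IsWeightedHomogeneous w q a) (n : ℕ) :
    IsWeightedHomogeneous w (∑ i ∈ Finset.range n, p ^ i * q ^ (n - 1 - i)) ((n - 1) • a) := by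
  refine IsWeightedHomogeneous.sum _ _ _ fun i hi ↦ ?_
  have hin : i + (n - 1 - i) = n - 1 := by have := Finset.mem_range.mp hi; omega
  simpa only [← add_nsmul, hin] using (hp.pow i).mul (hq.pow (n - 1 - i))

lemma isWeightedHomogeneous_orbifoldMatrix {σ K M : Type*} [CommRing K] [AddCommMonoid M]
    {w : σ → M} {t v x y : MvPolynomial σ K} {a : M} {b : ℕ} (hb : b ≠ 0)
    (ht : IsWeightedHomogeneous w t a) (hv : IsWeightedHomogeneous w v (b • a))
    (hx : IsWeightedHomogeneous w x (2 • a)) (hy : IsWeightedHomogeneous w y ((b - 1) • a))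
    (i j : Fin 2) :
    IsWeightedHomogeneous w (orbifoldMatrix b t v x y i j)
      (!![2 • a, b • a; b • a, (b - 1) • 2 • a] i j) := by
  have hty : IsWeightedHomogeneous w (t * y) (b • a) := by
    simpa only [sub_one_nsmul_add hb] using ht.mul hy
  have hy2 : IsWeightedHomogeneous w (y ^ 2) ((b - 1) • 2 • a) := by
    simpa only [smul_comm 2 (b - 1) a] using hy.pow 2
  fin_cases i <;> fin_cases j
  · exact hx.sub (ht.pow 2)
  · exact hv.add hty
  · exact hv.sub hty
  · exact (isWeightedHomogeneous_geom_sum₂ hx (ht.pow 2) b).add hy2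

lemma wHom_iff_isWeightedHomogeneous {w : Fin 4 → ℚ} {q : ℚ} {p : R4} :
    WHom w q p ↔ IsWeightedHomogeneous w p q := by
  have hweight (m : Fin 4 →₀ ℕ) : Finsupp.weight w m = ∑ i, (m i : ℚ) * w i := by
    simp only [Finsupp.weight_apply, nsmul_eq_mul]
    exact Finsupp.sum_fintype _ _ fun _ ↦ by rw [Nat.cast_zero, zero_mul]
  simp only [WHom, IsWeightedHomogeneous, mem_support_iff, hweight]

theorem stmt0_general {K : Type*} [CommRing K] {b : ℕ} (hb : b ≠ 0) {s : K}
    (hs : s ^ (2 * b) = 1) :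
    let d : Matrix (Fin 2) (Fin 2) (MvPolynomial (Fin 4) K) :=
      orbifoldMatrix b (C s * X 0) (X 1) (X 2) (X 3)
    let f : MvPolynomial (Fin 4) K := X 2 ^ b + X 2 * X 3 ^ 2 - X 0 ^ (2 * b) - X 1 ^ 2
    d.det = f ∧ IsMatrixFactorisation f d.adjugate d ∧
      ∀ i j, IsWeightedHomogeneous ![1 / (b : ℚ), 1, 2 / (b : ℚ), 1 - 1 / (b : ℚ)] (d i j)
        (!![2 / (b : ℚ), 1; 1, 2 - 2 / (b : ℚ)] i j) := by
  intro d f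
  have hdet : d.det = f := by
    rw [det_orbifoldMatrix, mul_pow, ← C_pow, hs, C_1, one_mul]
  refine ⟨hdet, hdet ▸ isMatrixFactorisation_adjugate d, ?_⟩
  have hb' : (b : ℚ) ≠ 0 := Nat.cast_ne_zero.mpr hb
  have h2 : 2 • (1 / (b : ℚ)) = 2 / b := by rw [nsmul_eq_mul, Nat.cast_two, mul_one_div]
  have hb1 : b • (1 / (b : ℚ)) = 1 := by rw [nsmul_eq_mul, mul_one_div_cancel hb']
  have hpred (c : ℚ) : (b - 1) • (c / (b : ℚ)) = c - c / b := by
    rw [nsmul_eq_mul, Nat.cast_pred (Nat.pos_of_ne_zero hb), sub_one_mul, mul_div_cancel₀ c hb']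
  set w : Fin 4 → ℚ := ![1 / (b : ℚ), 1, 2 / (b : ℚ), 1 - 1 / (b : ℚ)]
  have hsu : IsWeightedHomogeneous w (C s * X 0) (1 / (b : ℚ)) :=
    (isWeightedHomogeneous_X K w 0).C_mul s
  have hv : IsWeightedHomogeneous w (X 1 : MvPolynomial (Fin 4) K) (b • (1 / (b : ℚ))) := by
    rw [hb1]; exact isWeightedHomogeneous_X K w 1
  have hx : IsWeightedHomogeneous w (X 2 : MvPolynomial (Fin 4) K) (2 • (1 / (b : ℚ))) := by
    rw [h2]; exact isWeightedHomogeneous_X K w 2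
  have hy : IsWeightedHomogeneous w (X 3 : MvPolynomial (Fin 4) K) ((b - 1) • (1 / (b : ℚ))) := by
    rw [hpred]; exact isWeightedHomogeneous_X K w 3
  simpa only [h2, hb1, hpred] using isWeightedHomogeneous_orbifoldMatrix hb hsu hv hx hy

theorem stmt0 (b : ℕ) (hb : 2 ≤ b) (s : ℂ) (hs : s ^ (2 * b) = 1) :
    (dD b s).det = x ^ b + x * y ^ 2 - u ^ (2 * b) - v ^ 2 ∧
    dD b s * (dD b s).adjugate
      = (x ^ b + x * y ^ 2 - u ^ (2 * b) - v ^ 2) • (1 : Matrix (Fin 2) (Fin 2) R4) ∧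
    (dD b s).adjugate * dD b s
      = (x ^ b + x * y ^ 2 - u ^ (2 * b) - v ^ 2) • (1 : Matrix (Fin 2) (Fin 2) R4) ∧
    ∀ i j, WHom ![1 / (b : ℚ), 1, 2 / (b : ℚ), 1 - 1 / (b : ℚ)]
      (!![2 / (b : ℚ), 1; 1, 2 - 2 / (b : ℚ)] i j) (dD b s i j) := by
  obtain ⟨hdet, hfac, hhom⟩ := stmt0_general (Nat.ne_zero_of_lt hb) hs
  simp only [dD_eq_orbifoldMatrix, wHom_iff_isWeightedHomogeneous]
  exact ⟨hdet, hfac.right_mul_left, hfac.left_mul_right, hhom⟩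
end
end

section
/- Let b ≥ 2 be an integer and let s ∈ ℂ satisfy s^{2b} = 1. In R = ℂ[u,v,x,y] let d¹ = [[x − s²u², v + s·u·y], [v − s·u·y, (Σ_{i=0}^{b−1} x^i (s·u)^{2(b−1−i)}) + y²]], let d⁰ be the adjugate of d¹, let d = [[0, d¹], [d⁰, 0]] be the 4×4 twisted differential, and set S = str(∂_u d · ∂_v d · ∂_x d · ∂_y d) ∈ R. Then for all natural numbers c, e, the coefficient of the monomial u^{2b−2} v⁰ x^c y^e in S equals 4b·s^{2b−1} if c = e = 0, and equals 0 otherwise. Equivalently, the right quantum dimension of this matrix factorisation of x^b + x·y² − u^{2b} − v² equals −1/s; in particular it is non-zero. -/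
/-!
For a `2 × 2` matrix, taking the adjugate is linear, reverses products and preserves the trace.
With `d⁰` the adjugate of `d¹`, both halves of the supertrace are therefore traces of the product
`∂d¹ · ∂d⁰ · ∂d¹ · ∂d⁰`, up to an exchange of its second and fourth factors. Multiplying out gives
`S = δ T - 4 s y²`, where `T` is the polynomial in `x` and `q = (su)²` in the last entry of `d¹`
and `δ` is the derivation `4 s³ u² ∂ₓ + 2 s u ∂ᵤ`.

Now `δ x = δ q`, so `δ` annihilates `x - q`. Applying it to `(x - q) T = xᵇ - qᵇ` yields
`δ T = b (xᵇ⁻¹ - qᵇ⁻¹) / (x - q) * δ q`; an induction on `b` gives the same identity without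
division. Hence `S = 4 b s³ u² ∑_{i < b - 1} xⁱ qᵇ⁻²⁻ⁱ - 4 s y²`, in which `u` reaches the degree
`2b - 2` only in the term `i = 0`.
-/

open MvPolynomial

noncomputable section

/-- The exponent vector of the monomial `u^a v^b x^c y^e`. -/
def mon (a b c e : ℕ) : Fin 4 →₀ ℕ :=
  Finsupp.single 0 a + Finsupp.single 1 b + Finsupp.single 2 c + Finsupp.single 3 e

/-- Entrywise partial derivative of a matrix of polynomials. -/
def pd {m n : Type} (i : Fin 4) (M : Matrix m n R4) : Matrix m n R4 :=
  M.map fun p => pderiv i p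

/-- The supertrace of a `2r × 2r` block matrix. -/
def str {r : ℕ} (M : Matrix (Fin r ⊕ Fin r) (Fin r ⊕ Fin r) R4) : R4 :=
  Matrix.trace M.toBlocks₁₁ - Matrix.trace M.toBlocks₂₂

/-- The twisted differential `d = [[0, d¹], [d⁰, 0]]` with `d⁰` the adjugate of `d¹`. -/
def DD (b : ℕ) (s : ℂ) : Matrix (Fin 2 ⊕ Fin 2) (Fin 2 ⊕ Fin 2) R4 :=
  Matrix.fromBlocks 0 (dD b s) (dD b s).adjugate 0

/-- The supertrace `S = str(∂_u d · ∂_v d · ∂_x d · ∂_y d)`. -/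
def SD (b : ℕ) (s : ℂ) : R4 :=
  str (pd 0 (DD b s) * pd 1 (DD b s) * pd 2 (DD b s) * pd 3 (DD b s))

theorem trace_adjugate_fin_two {A : Type*} [CommRing A] (M : Matrix (Fin 2) (Fin 2) A) :
    M.adjugate.trace = M.trace := by
  rw [Matrix.adjugate_fin_two, Matrix.trace_fin_two_of, Matrix.trace_fin_two, add_comm]

theorem trace_adjugate_mul_mul_adjugate_mul {A : Type*} [CommRing A]
    (M₁ M₂ M₃ M₄ : Matrix (Fin 2) (Fin 2) A) :
    (M₁.adjugate * M₂ * M₃.adjugate * M₄).trace =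
      (M₁ * M₄.adjugate * M₃ * M₂.adjugate).trace := by
  have adjugate_adjugate (M : Matrix (Fin 2) (Fin 2) A) : M.adjugate.adjugate = M := by
    simp [Matrix.adjugate_adjugate]
  calc (M₁.adjugate * M₂ * M₃.adjugate * M₄).trace
      = (M₁.adjugate * M₂ * M₃.adjugate * M₄).adjugate.trace := (trace_adjugate_fin_two _).symm
    _ = (M₄.adjugate * M₃ * M₂.adjugate * M₁).trace := by
      simp only [Matrix.adjugate_mul_distrib, adjugate_adjugate, Matrix.mul_assoc]
    _ = (M₁ * M₄.adjugate * M₃ * M₂.adjugate).trace := by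
      rw [Matrix.trace_mul_comm]
      simp only [Matrix.mul_assoc]

theorem derivation_geom_sum₂_succ {K A M : Type*} [CommSemiring K] [CommRing A]
    [AddCommMonoid M] [Algebra K A] [Module A M] [Module K M] (D : Derivation K A M) {a b : A}
    (h : D a = D b) (n : ℕ) :
    D (∑ i ∈ Finset.range (n + 1), a ^ i * b ^ (n - i)) =
      ((n + 1) * ∑ i ∈ Finset.range n, a ^ i * b ^ (n - 1 - i)) • D b := by
  induction n with
  | zero => simp
  | succ n ih =>
    rw [geom_sum₂_succ_eq, map_add, Derivation.leibniz, Derivation.leibniz_pow]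
    simp only [Nat.add_sub_cancel, ih, h, smul_smul, ← Nat.cast_smul_eq_nsmul A, ← add_smul]
    rw [geom_sum₂_succ_eq a b]
    congr 1
    push_cast
    ring

theorem pd_fromBlocks {l m n o : Type} (i : Fin 4) (A : Matrix n l R4) (B : Matrix n m R4)
    (B' : Matrix o l R4) (A' : Matrix o m R4) :
    pd i (Matrix.fromBlocks A B B' A') =
      Matrix.fromBlocks (pd i A) (pd i B) (pd i B') (pd i A') :=
  Matrix.fromBlocks_map ..

theorem pd_zero {m n : Type} (i : Fin 4) : pd i (0 : Matrix m n R4) = 0 :=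
  Matrix.map_zero _ (map_zero _)

theorem pd_fin_two_of (i : Fin 4) (a b c d : R4) :
    pd i !![a, b; c, d] = !![pderiv i a, pderiv i b; pderiv i c, pderiv i d] := by
  ext j k
  fin_cases j <;> fin_cases k <;> rfl

theorem pd_adjugate_fin_two (i : Fin 4) (M : Matrix (Fin 2) (Fin 2) R4) :
    pd i M.adjugate = (pd i M).adjugate := by
  simp only [Matrix.adjugate_fin_two, pd_fin_two_of, map_neg]
  rfl

theorem str_fromBlocks {r : ℕ} (A B B' A' : Matrix (Fin r) (Fin r) R4) :
    str (Matrix.fromBlocks A B B' A') = A.trace - A'.trace := by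
  rw [str, Matrix.toBlocks_fromBlocks₁₁, Matrix.toBlocks_fromBlocks₂₂]

theorem str_pd_fromBlocks_adjugate (i j k l : Fin 4) (M : Matrix (Fin 2) (Fin 2) R4) :
    let d := Matrix.fromBlocks 0 M M.adjugate 0
    str (pd i d * pd j d * pd k d * pd l d) =
      (pd i M * (pd j M).adjugate * pd k M * (pd l M).adjugate).trace -
        (pd i M * (pd l M).adjugate * pd k M * (pd j M).adjugate).trace := by
  simp only [pd_fromBlocks, pd_zero, pd_adjugate_fin_two, Matrix.fromBlocks_multiply,
    zero_mul, mul_zero, zero_add, add_zero, str_fromBlocks, trace_adjugate_mul_mul_adjugate_mul]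

theorem mon_inj {a b c e a' b' c' e' : ℕ} :
    mon a b c e = mon a' b' c' e' ↔ a = a' ∧ b = b' ∧ c = c' ∧ e = e' := by
  simp [mon, Finsupp.ext_iff, Fin.forall_fin_succ]

theorem mon_add (a b c e a' b' c' e' : ℕ) :
    mon a b c e + mon a' b' c' e' = mon (a + a') (b + b') (c + c') (e + e') := by
  simp only [mon, Finsupp.single_add]
  abel

theorem monomial_mon (a b c e : ℕ) (k : ℂ) :
    monomial (mon a b c e) k = C k * (u ^ a * v ^ b * x ^ c * y ^ e) := by
  simp only [u, v, x, y, mon, X_pow_eq_monomial, monomial_mul, C_mul_monomial, mul_one]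

/-- The polynomial `(xⁿ - qⁿ) / (x - q)` with `q = (su)²`; for `n = b` it is the part of the last
entry of `dD b s` that involves `x` and `u`. -/
def dividedDiff (n : ℕ) (s : ℂ) : R4 :=
  ∑ i ∈ Finset.range n, x ^ i * (C s * u) ^ (2 * (n - 1 - i))

theorem pderiv_dividedDiff_eq_zero {i : Fin 4} (hu : i ≠ 0) (hx : i ≠ 2) (n : ℕ) (s : ℂ) :
    pderiv i (dividedDiff n s) = 0 := by
  simp [dividedDiff, x, u, pderiv_X, hu, hx]

theorem dD_eq (b : ℕ) (s : ℂ) :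
    dD b s = !![x - C s ^ 2 * u ^ 2, v + C s * u * y;
      v - C s * u * y, dividedDiff b s + y ^ 2] :=
  rfl

theorem pd_u_dD (b : ℕ) (s : ℂ) :
    pd 0 (dD b s) =
      !![-(2 * C s ^ 2 * u), C s * y; -(C s * y), pderiv 0 (dividedDiff b s)] := by
  rw [dD_eq, pd_fin_two_of]
  simp [u, v, x, y, pderiv_X, mul_left_comm, mul_assoc]

theorem pd_v_dD (b : ℕ) (s : ℂ) : pd 1 (dD b s) = !![0, 1; 1, 0] := by
  rw [dD_eq, pd_fin_two_of]
  simp [u, v, x, y, pderiv_X, pderiv_dividedDiff_eq_zero]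

theorem pd_x_dD (b : ℕ) (s : ℂ) :
    pd 2 (dD b s) = !![1, 0; 0, pderiv 2 (dividedDiff b s)] := by
  rw [dD_eq, pd_fin_two_of]
  simp [u, v, x, y, pderiv_X]

theorem pd_y_dD (b : ℕ) (s : ℂ) :
    pd 3 (dD b s) = !![0, C s * u; -(C s * u), 2 * y] := by
  rw [dD_eq, pd_fin_two_of]
  simp [u, v, x, y, pderiv_X, pderiv_dividedDiff_eq_zero]

/-- The derivation `4 s³ u² ∂ₓ + 2 s u ∂ᵤ`, which annihilates `x - (su)²`. It carries the
dependence of `SD b s` on `dividedDiff b s`. -/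
def supertraceDerivation (s : ℂ) : Derivation ℂ R4 R4 :=
  (4 * C s ^ 3 * u ^ 2) • pderiv 2 + (2 * C s * u) • pderiv 0

theorem supertraceDerivation_apply (s : ℂ) (p : R4) :
    supertraceDerivation s p = 4 * C s ^ 3 * u ^ 2 * pderiv 2 p + 2 * C s * u * pderiv 0 p :=
  rfl

theorem SD_eq_supertraceDerivation (b : ℕ) (s : ℂ) :
    SD b s = supertraceDerivation s (dividedDiff b s) - 4 * C s * y ^ 2 := by
  rw [SD, DD, str_pd_fromBlocks_adjugate, pd_u_dD, pd_v_dD, pd_x_dD, pd_y_dD,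
    supertraceDerivation_apply]
  simp only [Matrix.adjugate_fin_two_of, Matrix.mul_fin_two, Matrix.trace_fin_two_of]
  ring

theorem supertraceDerivation_x (s : ℂ) : supertraceDerivation s x = 4 * C s ^ 3 * u ^ 2 := by
  simp [supertraceDerivation_apply, x, pderiv_X]

theorem supertraceDerivation_u (s : ℂ) : supertraceDerivation s u = 2 * C s * u := by
  simp [supertraceDerivation_apply, u, pderiv_X]

theorem supertraceDerivation_sq (s : ℂ) :
    supertraceDerivation s ((C s * u) ^ 2) = 4 * C s ^ 3 * u ^ 2 := by
  rw [Derivation.leibniz_pow, Derivation.leibniz, supertraceDerivation_u, derivation_C]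
  simp only [smul_eq_mul, nsmul_eq_mul]
  push_cast
  ring

theorem supertraceDerivation_dividedDiff_succ (n : ℕ) (s : ℂ) :
    supertraceDerivation s (dividedDiff (n + 1) s) =
      ((n : R4) + 1) * dividedDiff n s * (4 * C s ^ 3 * u ^ 2) := by
  simp only [dividedDiff, pow_mul (C s * u) 2, Nat.add_sub_cancel]
  have h : supertraceDerivation s x = supertraceDerivation s ((C s * u) ^ 2) := by
    rw [supertraceDerivation_x, supertraceDerivation_sq]
  rw [derivation_geom_sum₂_succ _ h, supertraceDerivation_sq, smul_eq_mul]

theorem SD_succ (n : ℕ) (s : ℂ) :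
    SD (n + 1) s =
      ((n : R4) + 1) * dividedDiff n s * (4 * C s ^ 3 * u ^ 2) - 4 * C s * y ^ 2 := by
  rw [SD_eq_supertraceDerivation, supertraceDerivation_dividedDiff_succ]

theorem dividedDiff_eq_sum_monomial (n : ℕ) (s : ℂ) :
    dividedDiff n s =
      ∑ i ∈ Finset.range n, monomial (mon (2 * (n - 1 - i)) 0 i 0) (s ^ (2 * (n - 1 - i))) := by
  simp only [dividedDiff, monomial_mon, map_pow]
  exact Finset.sum_congr rfl fun i _ => by ring

theorem coeff_dividedDiff (n : ℕ) (s : ℂ) (a d c e : ℕ) :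
    coeff (mon a d c e) (dividedDiff n s) =
      if a + 2 * c + 2 = 2 * n ∧ d = 0 ∧ e = 0 then s ^ a else 0 := by
  simp only [dividedDiff_eq_sum_monomial, coeff_sum, coeff_monomial, mon_inj]
  split_ifs with h
  · obtain ⟨h, rfl, rfl⟩ := h
    have ha : 2 * (n - 1 - c) = a := by omega
    have hc : c ∈ Finset.range n := Finset.mem_range.2 (by omega)
    rw [Finset.sum_eq_single_of_mem c hc fun i _ hi => if_neg (by tauto),
      if_pos ⟨ha, rfl, rfl, rfl⟩, ha]
  · refine Finset.sum_eq_zero fun i hi => if_neg ?_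
    have := Finset.mem_range.1 hi
    omega

theorem coeff_SD_succ (n : ℕ) (s : ℂ) (a d c e : ℕ) :
    coeff (mon (a + 2) d c e) (SD (n + 1) s) =
      if a + 2 * c + 2 = 2 * n ∧ d = 0 ∧ e = 0 then 4 * (n + 1) * s ^ (a + 3) else 0 := by
  have hSD : SD (n + 1) s =
      monomial (mon 2 0 0 0) (4 * (n + 1) * s ^ 3) * dividedDiff n s -
        monomial (mon 0 0 0 2) (4 * s) := by
    simp only [SD_succ, monomial_mon, map_mul, map_add, map_pow, map_natCast, map_ofNat, map_one]
    ring
  have hmon : mon (a + 2) d c e = mon 2 0 0 0 + mon a d c e := by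
    simp only [mon_add, zero_add, add_comm a]
  have hy : coeff (mon (a + 2) d c e) (monomial (mon 0 0 0 2) (4 * s)) = 0 := by
    rw [coeff_monomial, if_neg fun h => by simp [mon_inj] at h]
  rw [hSD, coeff_sub, hy, sub_zero, hmon, coeff_monomial_mul, coeff_dividedDiff, mul_ite, mul_zero]
  congr 1
  ring

theorem stmt1_general (b : ℕ) (hb : 2 ≤ b) (s : ℂ) :
    (∀ c e : ℕ, coeff (mon (2 * b - 2) 0 c e) (SD b s)
        = if c = 0 ∧ e = 0 then (4 * b : ℂ) * s ^ (2 * b - 1) else 0) ∧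
    -(1 / (4 * (b : ℂ))) * coeff (mon (2 * b - 2) 0 0 0) (SD b s) = -s ^ (2 * b - 1) := by
  have hcoeff (c e : ℕ) : coeff (mon (2 * b - 2) 0 c e) (SD b s) =
      if c = 0 ∧ e = 0 then (4 * b : ℂ) * s ^ (2 * b - 1) else 0 := by
    obtain ⟨k, rfl⟩ := Nat.exists_eq_add_of_le' hb
    have hdeg : 2 * k + 2 * c + 2 = 2 * (k + 1) ∧ 0 = 0 ∧ e = 0 ↔ c = 0 ∧ e = 0 := by omega
    have hexp : 2 * (k + 2) - 2 = 2 * k + 2 := by omega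
    have hpow : 2 * (k + 2) - 1 = 2 * k + 3 := by omega
    have hk : ((k + 1 : ℕ) : ℂ) + 1 = (k + 2 : ℕ) := (Nat.cast_succ (k + 1)).symm
    rw [hexp, hpow, coeff_SD_succ (k + 1), hk]
    exact if_congr hdeg rfl rfl
  have hb₀ : (b : ℂ) ≠ 0 := Nat.cast_ne_zero.2 (by omega)
  refine ⟨hcoeff, ?_⟩
  rw [hcoeff, if_pos ⟨rfl, rfl⟩]
  field_simp

theorem stmt1 (b : ℕ) (hb : 2 ≤ b) (s : ℂ) (hs : s ^ (2 * b) = 1) :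
    (∀ c e : ℕ, coeff (mon (2 * b - 2) 0 c e) (SD b s)
        = if c = 0 ∧ e = 0 then (4 * b : ℂ) * s ^ (2 * b - 1) else 0) ∧
    -(1 / (4 * (b : ℂ))) * coeff (mon (2 * b - 2) 0 0 0) (SD b s) = -1 / s := by
  obtain ⟨hcoeff, hdim⟩ := stmt1_general b hb s
  have hinv : s ^ (2 * b - 1) = s⁻¹ :=
    eq_inv_of_mul_eq_one_left ((pow_sub_one_mul (by omega) s).trans hs)
  exact ⟨hcoeff, by rw [hdim, hinv, neg_div, one_div]⟩
end
end

section
/- There exist 4×4 matrices d⁰, d¹ over R = ℂ[u,v,x,y] with the following properties, where f = x³ + y⁵ − u^{30} − v²: (i) d¹·d⁰ = f·1 and d⁰·d¹ = f·1, i.e. (d⁰, d¹) is a rank-four matrix factorisation of V^{(E₈)}(x,y) − V^{(A_{29})}(u,v); (ii) there exist rational numbers α₁,…,α₄ and β₁,…,β₄ such that for all i, j the (i,j) entry of d¹ is weighted homogeneous of degree 1 + α_j − β_i and the (i,j) entry of d⁰ is weighted homogeneous of degree 1 + β_j − α_i, for the weights w(u) = 1/15, w(v) = 1, w(x) = 2/3,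 w(y) = 2/5 (so the factorisation is graded); (iii) writing d = [[0, d¹], [d⁰, 0]] for the 8×8 twisted differential and S = str(∂_u d · ∂_v d · ∂_x d · ∂_y d) ∈ R, the coefficient of the monomial u^{28} v⁰ x⁰ y⁰ in S is non-zero and the coefficient of the monomial u⁰ v⁰ x¹ y³ in S is non-zero (i.e. both the right and the left quantum dimension are non-zero). -/
/-! If `F = a p² + 2 b p q + c q² - (a c - b²) t²`, the shape of Curto and Morrison's universal flop
of length two, then `F` is the square of an explicit 4×4 matrix `φ`, so `φ - v` and `φ + v` factor
`F - v²`. The threefold `x³ + y⁵ = u³⁰ + v²` admits a small resolution by Brieskorn's simultaneous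
resolution (30 is the Coxeter number of `E₈`), so `x³ + y⁵ - u³⁰` should have this shape.

Let `t` be a multiple of `u`, and take `p, q, a` to be deformations of `x, y, x` by powers of `t`.
With `b = r t² / 2` and `c` equal to `q r` up to a multiple of `t¹⁸`, the terms divisible by `p q`
cancel, those in `p` make up `x³`, and what remains is a binary quintic form in `q` and `t⁶`.
Requiring it to be `y⁵` up to a multiple of `t³⁰` amounts to four equations on the coefficients,
which have a solution in the field `ℚ(2 cos (2π/15))`. Rescaling `u` turns that multiple into
`-u³⁰`.

Since `∂_v d⁰ = -1` and `∂_v d¹ = 1`, the supertrace is `-2 tr(∂_u φ ∂_x φ ∂_y φ)`. By homogeneity,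
the coefficients of `u²⁸` and of `x y³` in this trace are its values at `(1, 0, 0, 0)` and
`(0, 0, 1, 1)`, which are non-zero. -/

open MvPolynomial

noncomputable section

section GradedMatrix

variable {σ R M l m n : Type*} [AddCommGroup M] {w : σ → M}

/-- A matrix of polynomials which is homogeneous of degree `d` as a map of graded free modules:
`s` and `t` are the degree shifts of the rows and of the columns. -/
def IsGradedMatrix [CommSemiring R] (w : σ → M) (s : m → M) (t : n → M) (d : M)
    (N : Matrix m n (MvPolynomial σ R)) : Prop :=
  ∀ i j, IsWeightedHomogeneous w (N i j) (d + t j - s i)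

namespace IsGradedMatrix

section CommSemiring

variable [CommSemiring R] {r : l → M} {s : m → M} {t : n → M} {d e : M}

lemma add {N N' : Matrix m n (MvPolynomial σ R)} (h : IsGradedMatrix w s t d N)
    (h' : IsGradedMatrix w s t d N') : IsGradedMatrix w s t d (N + N') :=
  fun i j => (h i j).add (h' i j)

lemma mul [Fintype m] {N : Matrix l m (MvPolynomial σ R)} {N' : Matrix m n (MvPolynomial σ R)}
    (h : IsGradedMatrix w r s d N) (h' : IsGradedMatrix w s t e N') :
    IsGradedMatrix w r t (d + e) (N * N') := by
  intro i j
  refine IsWeightedHomogeneous.sum _ _ _ fun b _ => ?_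
  convert (h i b).mul (h' b j) using 1
  abel

lemma trace [Fintype m] {N : Matrix m m (MvPolynomial σ R)} (h : IsGradedMatrix w s s d N) :
    IsWeightedHomogeneous w N.trace d :=
  IsWeightedHomogeneous.sum _ _ _ fun i _ => by simpa using h i i

lemma map_pderiv {N : Matrix m n (MvPolynomial σ R)} (h : IsGradedMatrix w s t d N) (i : σ) :
    IsGradedMatrix w s t (d - w i) (N.map (pderiv i)) :=
  fun a b => (h a b).pderiv (by abel)

lemma smul_one [DecidableEq m] {f : MvPolynomial σ R} (hf : IsWeightedHomogeneous w f d)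
    (s : m → M) : IsGradedMatrix w s s d (f • (1 : Matrix m m (MvPolynomial σ R))) := by
  intro i j
  obtain rfl | hij := eq_or_ne i j
  · simpa using hf
  · simpa [hij] using isWeightedHomogeneous_zero R w _

end CommSemiring

lemma sub [CommRing R] {s : m → M} {t : n → M} {d : M} {N N' : Matrix m n (MvPolynomial σ R)}
    (h : IsGradedMatrix w s t d N) (h' : IsGradedMatrix w s t d N') :
    IsGradedMatrix w s t d (N - N') :=
  fun i j => (h i j).sub (h' i j)

end IsGradedMatrix

end GradedMatrix

lemma wHom_of_isWeightedHomogeneous {w : Fin 4 → ℚ} {q : ℚ} {f : R4}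
    (h : IsWeightedHomogeneous w f q) : WHom w q f := by
  intro m hm
  simpa [Finsupp.weight_apply, Finsupp.sum_fintype] using h (mem_support_iff.mp hm)

lemma isWeightedHomogeneous_of_eq {σ R M : Type*} [CommSemiring R] [AddCommMonoid M] {w : σ → M}
    {d e : M} {f : MvPolynomial σ R} (h : IsWeightedHomogeneous w f d) (hd : d = e) :
    IsWeightedHomogeneous w f e :=
  hd ▸ h

lemma eval_eq_coeff_mul_prod {σ R M : Type*} [CommSemiring R] [AddCommMonoid M] {w : σ → M}
    {d : M} {f : MvPolynomial σ R} (hf : IsWeightedHomogeneous w f d) {z : σ → R} {m : σ →₀ ℕ}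
    (hm : ∀ m', Finsupp.weight w m' = d → (∀ i, z i = 0 → m' i = 0) → m' = m) :
    eval z f = coeff m f * m.prod fun i e => z i ^ e := by
  rw [eval_eq, Finset.sum_eq_single m, Finsupp.prod]
  · intro m' hm' hne
    obtain ⟨i, hzi, hi⟩ : ∃ i, z i = 0 ∧ m' i ≠ 0 := by
      by_contra! h
      exact hne (hm m' (hf (mem_support_iff.mp hm')) h)
    rw [Finset.prod_eq_zero (Finsupp.mem_support_iff.mpr hi) (by rw [hzi, zero_pow hi]), mul_zero]
  · intro h
    rw [notMem_support_iff.mp h, zero_mul]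

section Flop

variable {S : Type*} [CommRing S]

/-- A square root of Curto and Morrison's universal flop of length two: see
`flopMatrix_mul_self`. -/
def flopMatrix (a b c p q t : S) : Matrix (Fin 4) (Fin 4) S :=
  !![0, -t, p, q;
     t * (a * c - b ^ 2), 0, b * p + c * q, -(a * p + b * q);
     a * p + b * q, q, t * b, -(t * a);
     b * p + c * q, -p, t * c, -(t * b)]

lemma flopMatrix_mul_self (a b c p q t : S) :
    flopMatrix a b c p q t * flopMatrix a b c p q t =
      (a * p ^ 2 + 2 * b * p * q + c * q ^ 2 - (a * c - b ^ 2) * t ^ 2) •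
        (1 : Matrix (Fin 4) (Fin 4) S) := by
  ext i j
  fin_cases i <;> fin_cases j <;>
    simp [flopMatrix, Matrix.mul_apply, Fin.sum_univ_four] <;> ring

/-- The degree shifts making `flopMatrix a b c p q t` homogeneous, where `dp, dq, dt` are the
degrees of `p, q, t`. -/
def flopShift {M : Type*} [AddCommGroup M] (dp dq dt : M) : Fin 4 → M :=
  ![0, 2 • dt - dp - dq, dt - dq, dt - dp]

lemma isGradedMatrix_flopMatrix {σ M : Type*} [AddCommGroup M] {w : σ → M}
    {a b c p q t : MvPolynomial σ S} {dp dq dt : M}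
    (hp : IsWeightedHomogeneous w p dp) (hq : IsWeightedHomogeneous w q dq)
    (ht : IsWeightedHomogeneous w t dt)
    (ha : IsWeightedHomogeneous w a (2 • dq - 2 • dt))
    (hb : IsWeightedHomogeneous w b (dp + dq - 2 • dt))
    (hc : IsWeightedHomogeneous w c (2 • dp - 2 • dt)) :
    IsGradedMatrix w (flopShift dp dq dt) (flopShift dp dq dt) (dp + dq - dt)
      (flopMatrix a b c p q t) := by
  have hdet : IsWeightedHomogeneous w (a * c - b ^ 2) (2 • (dp + dq - 2 • dt)) :=
    .sub (by convert ha.mul hc using 1; abel) (hb.pow 2)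
  have hap : IsWeightedHomogeneous w (a * p + b * q) (dp + 2 • dq - 2 • dt) :=
    .add (by convert ha.mul hp using 1; abel) (by convert hb.mul hq using 1; abel)
  have hbp : IsWeightedHomogeneous w (b * p + c * q) (2 • dp + dq - 2 • dt) :=
    .add (by convert hb.mul hp using 1; abel) (by convert hc.mul hq using 1; abel)
  have hzero := isWeightedHomogeneous_zero S w (dp + dq - dt)
  let degree : Matrix (Fin 4) (Fin 4) M :=
    !![dp + dq - dt, dt, dp, dq;
       dt + 2 • (dp + dq - 2 • dt), dp + dq - dt, 2 • dp + dq - 2 • dt, dp + 2 • dq - 2 • dt;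
       dp + 2 • dq - 2 • dt, dq, dt + (dp + dq - 2 • dt), dt + (2 • dq - 2 • dt);
       2 • dp + dq - 2 • dt, dp, dt + (2 • dp - 2 • dt), dt + (dp + dq - 2 • dt)]
  have hdegree : ∀ i j,
      dp + dq - dt + flopShift dp dq dt j - flopShift dp dq dt i = degree i j := by
    intro i j
    fin_cases i <;> fin_cases j <;> simp [degree, flopShift] <;> abel
  intro i j
  rw [hdegree]
  fin_cases i <;> fin_cases j
  exacts [hzero, ht.neg, hp, hq, ht.mul hdet, hzero, hbp, hap.neg,
    hap, hq, ht.mul hb, (ht.mul ha).neg, hbp, hp.neg, ht.mul hc, (ht.mul hb).neg]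

lemma map_flopMatrix_eq_zero {K : Type*} [CommRing K] [Algebra K S] (D : Derivation K S S)
    {a b c p q t : S} (ha : D a = 0) (hb : D b = 0) (hc : D c = 0) (hp : D p = 0) (hq : D q = 0)
    (ht : D t = 0) : (flopMatrix a b c p q t).map D = 0 := by
  ext i j
  fin_cases i <;> fin_cases j <;>
    simp [flopMatrix, Derivation.leibniz_pow, ha, hb, hc, hp, hq, ht]

lemma trace_map_flopMatrix {K : Type*} [CommRing K] [Algebra K S] (D₀ D₁ D₂ : Derivation K S S)
    {a b c p q t : S} (ha₁ : D₁ a = 1) (hb₁ : D₁ b = 0) (hc₁ : D₁ c = 0) (hp₁ : D₁ p = 1)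
    (hq₁ : D₁ q = 0) (ht₁ : D₁ t = 0) (ha₂ : D₂ a = 0) (hp₂ : D₂ p = 0) (hq₂ : D₂ q = 1)
    (ht₂ : D₂ t = 0) :
    ((flopMatrix a b c p q t).map D₀ * (flopMatrix a b c p q t).map D₁ *
        (flopMatrix a b c p q t).map D₂).trace =
      D₀ t * ((2 * a + p) * (p * D₂ b + q * D₂ c + 2 * c) - 4 * b ^ 2 - 2 * b * q * D₂ b
          + (c * D₂ b - b * D₂ c) * t ^ 2)
        + (D₀ a - D₀ p) * t * (2 * c + 2 * p * D₂ b + q * D₂ c)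
        - D₀ q * t * ((2 * a + p) * D₂ c - 4 * b * D₂ b)
        - D₀ b * t * (4 * b + t ^ 2 * D₂ c)
        + D₀ c * t * (2 * a + p + t ^ 2 * D₂ b) := by
  simp [flopMatrix, Matrix.trace, Matrix.mul_apply, Fin.sum_univ_four, Derivation.leibniz_pow,
    ha₁, hb₁, hc₁, hp₁, hq₁, ht₁, ha₂, hp₂, hq₂, ht₂]
  ring

end Flop

section Supertrace

lemma add_smul_one_mul_sub_smul_one {S A : Type*} [CommRing S] [Ring A] [Algebra S A] {φ : A}
    {f : S} (h : φ * φ = f • 1) (g : S) :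
    (φ + g • 1) * (φ - g • 1) = (f - g ^ 2) • (1 : A) := by
  have hcomm : Commute φ (g • 1) := (Commute.one_right φ).smul_right g
  rw [← hcomm.mul_self_sub_mul_self_eq, h, smul_mul_smul_comm, one_mul, ← sub_smul, ← pow_two]

lemma sub_smul_one_mul_add_smul_one {S A : Type*} [CommRing S] [Ring A] [Algebra S A] {φ : A}
    {f : S} (h : φ * φ = f • 1) (g : S) :
    (φ - g • 1) * (φ + g • 1) = (f - g ^ 2) • (1 : A) := by
  simpa [sub_eq_add_neg] using add_smul_one_mul_sub_smul_one h (-g)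

lemma pd_smul_one {m : Type} [DecidableEq m] (i : Fin 4) (f : R4) :
    pd i (f • (1 : Matrix m m R4)) = pderiv i f • 1 := by
  ext1 a b
  obtain rfl | hab := eq_or_ne a b
  · simp [pd]
  · simp [pd, hab]

lemma pd_add {m n : Type} (i : Fin 4) (M N : Matrix m n R4) : pd i (M + N) = pd i M + pd i N :=
  Matrix.map_add _ (map_add _) M N

lemma pd_sub {m n : Type} (i : Fin 4) (M N : Matrix m n R4) : pd i (M - N) = pd i M - pd i N :=
  Matrix.map_sub _ (map_sub _) M N

lemma pd_fromBlocks_zero {m n : Type} (i : Fin 4) (M : Matrix m n R4) (N : Matrix n m R4) :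
    pd i (Matrix.fromBlocks 0 M N 0) = Matrix.fromBlocks 0 (pd i M) (pd i N) 0 := by
  simp [pd, Matrix.fromBlocks_map]

lemma str_fromBlocks_add_sub {r : ℕ} {φ : Matrix (Fin r) (Fin r) R4} (hφ : pd 1 φ = 0)
    {d : Matrix (Fin r ⊕ Fin r) (Fin r ⊕ Fin r) R4}
    (hd : d = Matrix.fromBlocks 0 (φ + v • 1) (φ - v • 1) 0) :
    str (pd 0 d * pd 1 d * pd 2 d * pd 3 d) =
      -(2 • Matrix.trace (pd 0 φ * pd 2 φ * pd 3 φ)) := by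
  have hv : ∀ i ≠ 1, pderiv i v = 0 := fun i hi => pderiv_X_of_ne hi.symm
  have hd_ne : ∀ i ≠ 1, pd i d = Matrix.fromBlocks 0 (pd i φ) (pd i φ) 0 := fun i hi => by
    simp [hd, pd_fromBlocks_zero, pd_add, pd_sub, pd_smul_one, hv i hi]
  have hd_one : pd 1 d = Matrix.fromBlocks 0 1 (-1) 0 := by
    simp [hd, pd_fromBlocks_zero, pd_add, pd_sub, pd_smul_one, hφ, v]
  rw [hd_one, hd_ne 0 (by decide), hd_ne 2 (by decide), hd_ne 3 (by decide)]
  simp [str, Matrix.fromBlocks_multiply]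
  ring

end Supertrace

/-- The parameters of a presentation of `x ^ 3 + y ^ 5` plus a multiple of `u ^ 30` in the shape of
the flop of length two. The parameter `k` rescales `u`. -/
structure FlopParams where
  (α β δ ε k : ℂ)

namespace FlopParams

/-- The weights of `u, v, x, y` for which `x ^ 3 + y ^ 5 - u ^ 30 - v ^ 2` has degree `2`. -/
def wt : Fin 4 → ℚ := ![1/15, 1, 2/3, 2/5]

variable (P : FlopParams)

/-- The entry `t` of the flop matrix. -/
def t : R4 := C P.k * u

/-- The entry `p` of the flop matrix. -/
def p : R4 := x - C P.α * P.t ^ 10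

/-- The entry `q` of the flop matrix. -/
def q : R4 := y - C P.β * P.t ^ 6

/-- The quadratic form in `q` and `t ^ 6` from which the entries `b` and `c` are built. -/
def r : R4 := P.q ^ 2 + C P.δ * P.q * P.t ^ 6 + C P.ε * P.t ^ 12

/-- The entry `a` of the flop matrix. -/
def a : R4 := x + C (2 * P.α) * P.t ^ 10

/-- The entry `b` of the flop matrix, chosen to cancel the part of `flopMatrix_mul_self` that is
divisible by `p * q`. -/
def b : R4 := C (1 / 2) * P.r * P.t ^ 2

/-- The entry `c` of the flop matrix; its last term completes the part of `flopMatrix_mul_self`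
that involves `p` to `x ^ 3`. -/
def c : R4 := P.q * P.r - C (3 * P.α ^ 2) * P.t ^ 18

/-- The flop matrix with the entries determined by `P`. -/
def matrix : Matrix (Fin 4) (Fin 4) R4 := flopMatrix P.a P.b P.c P.p P.q P.t

/-- The polynomial equations on the parameters that make `P.matrix` a square root of
`x ^ 3 + y ^ 5 - u ^ 30`: see `IsE8.quintic_eq`. -/
structure IsE8 : Prop where
  coeff_four : P.δ + 1 / 4 = 5 * P.β
  coeff_three : P.ε - 3 * P.α + P.δ / 2 = 10 * P.β ^ 2
  coeff_two : (P.δ ^ 2 + 2 * P.ε) / 4 - 3 * P.α * P.δ - 3 * P.α ^ 2 = 10 * P.β ^ 3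
  coeff_one : P.ε * (P.δ / 2 - 3 * P.α) = 5 * P.β ^ 4
  coeff_zero : (8 * P.α ^ 3 + P.ε ^ 2 / 4 - P.β ^ 5) * P.k ^ 30 = -1

variable {P}

lemma IsE8.quintic_eq (h : P.IsE8) (q s : ℂ) :
    (q ^ 2 + P.δ * q * s + P.ε * s ^ 2) *
          (q ^ 3 - 3 * P.α * q * s ^ 2 + (q ^ 2 + P.δ * q * s + P.ε * s ^ 2) * s / 4)
        - 3 * P.α ^ 2 * q ^ 2 * s ^ 3 + 8 * P.α ^ 3 * s ^ 5 =
      (q + P.β * s) ^ 5 + (8 * P.α ^ 3 + P.ε ^ 2 / 4 - P.β ^ 5) * s ^ 5 := by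
  linear_combination q ^ 4 * s * h.coeff_four + q ^ 3 * s ^ 2 * h.coeff_three
    + q ^ 2 * s ^ 3 * h.coeff_two + q * s ^ 4 * h.coeff_one

lemma IsE8.k_ne_zero (h : P.IsE8) : P.k ≠ 0 := by
  intro hk
  simpa [hk] using h.coeff_zero

lemma IsE8.flop_eq (h : P.IsE8) :
    P.a * P.p ^ 2 + 2 * P.b * P.p * P.q + P.c * P.q ^ 2 - (P.a * P.c - P.b ^ 2) * P.t ^ 2 =
      x ^ 3 + y ^ 5 - u ^ 30 := by
  refine MvPolynomial.funext fun z => ?_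
  have hquintic := h.quintic_eq (z 3 - P.β * (P.k * z 0) ^ 6) ((P.k * z 0) ^ 6)
  simp only [a, b, c, r, p, q, t, x, y, u, map_add, map_sub, map_mul, map_pow, map_ofNat, eval_X,
    eval_C]
  linear_combination hquintic + z 0 ^ 30 * h.coeff_zero

lemma IsE8.matrix_mul_self (h : P.IsE8) :
    P.matrix * P.matrix = (x ^ 3 + y ^ 5 - u ^ 30) • (1 : Matrix (Fin 4) (Fin 4) R4) := by
  rw [matrix, flopMatrix_mul_self, h.flop_eq]

variable (P)

lemma isGradedMatrix_matrix :
    IsGradedMatrix wt (flopShift (2 / 3) (2 / 5) (1 / 15)) (flopShift (2 / 3) (2 / 5) (1 / 15)) 1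
      P.matrix := by
  have ht : IsWeightedHomogeneous wt P.t (1 / 15) := (isWeightedHomogeneous_X ℂ wt 0).C_mul P.k
  have hCt (e : ℂ) (n : ℕ) : IsWeightedHomogeneous wt (C e * P.t ^ n) (n / 15) :=
    isWeightedHomogeneous_of_eq ((ht.pow n).C_mul e) (by simp [div_eq_mul_inv])
  have hx : IsWeightedHomogeneous wt x (2 / 3) := isWeightedHomogeneous_X ℂ wt 2
  have hy : IsWeightedHomogeneous wt y (2 / 5) := isWeightedHomogeneous_X ℂ wt 3
  have hp : IsWeightedHomogeneous wt P.p (2 / 3) :=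
    hx.sub (isWeightedHomogeneous_of_eq (hCt P.α 10) (by norm_num))
  have ha : IsWeightedHomogeneous wt P.a (2 / 3) :=
    hx.add (isWeightedHomogeneous_of_eq (hCt (2 * P.α) 10) (by norm_num))
  have hq : IsWeightedHomogeneous wt P.q (2 / 5) :=
    hy.sub (isWeightedHomogeneous_of_eq (hCt P.β 6) (by norm_num))
  have hr : IsWeightedHomogeneous wt P.r (4 / 5) :=
    ((isWeightedHomogeneous_of_eq (hq.pow 2) (by norm_num)).add
      (isWeightedHomogeneous_of_eq ((hq.C_mul P.δ).mul (ht.pow 6)) (by norm_num))).add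
      (isWeightedHomogeneous_of_eq (hCt P.ε 12) (by norm_num))
  have hb : IsWeightedHomogeneous wt P.b (14 / 15) :=
    isWeightedHomogeneous_of_eq ((hr.C_mul (1 / 2)).mul (ht.pow 2)) (by norm_num)
  have hc : IsWeightedHomogeneous wt P.c (6 / 5) :=
    (isWeightedHomogeneous_of_eq (hq.mul hr) (by norm_num)).sub
      (isWeightedHomogeneous_of_eq (hCt (3 * P.α ^ 2) 18) (by norm_num))
  have hdeg : (2 / 3 + 2 / 5 - 1 / 15 : ℚ) = 1 := by norm_num
  have h := isGradedMatrix_flopMatrix hp hq ht (isWeightedHomogeneous_of_eq ha (by norm_num))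
    (isWeightedHomogeneous_of_eq hb (by norm_num)) (isWeightedHomogeneous_of_eq hc (by norm_num))
  rwa [hdeg] at h

lemma pd_one_matrix : pd 1 P.matrix = 0 := by
  refine map_flopMatrix_eq_zero (pderiv 1) ?_ ?_ ?_ ?_ ?_ ?_ <;>
    simp [a, b, c, r, p, q, t, x, y, u, Derivation.leibniz_pow]

lemma isWeightedHomogeneous_trace :
    IsWeightedHomogeneous wt (pd 0 P.matrix * pd 2 P.matrix * pd 3 P.matrix).trace (28 / 15) := by
  have h := P.isGradedMatrix_matrix
  have htrace := (((h.map_pderiv 0).mul (h.map_pderiv 2)).mul (h.map_pderiv 3)).trace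
  exact isWeightedHomogeneous_of_eq htrace
    (show (1 - 1 / 15 + (1 - 2 / 3) + (1 - 2 / 5) : ℚ) = 28 / 15 by norm_num)

/-- The factor by which the coefficient of `u ^ 28` in the supertrace may vanish: see
`coeff_trace_u`. Here `r₀` and `r₁` are the values at `q = -β`, `t = 1` of `r` and of its
derivative with respect to `q`. -/
def rightDimFactor : ℂ :=
  let r₀ := P.β ^ 2 - P.δ * P.β + P.ε
  let r₁ := P.δ - 2 * P.β
  48 * P.α ^ 3 + 8 * P.α ^ 2 * r₁ + 18 * P.α * P.β * r₀ - 2 * P.α * P.β ^ 2 * r₁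
    + P.β * r₀ * r₁ + 3 * r₀ ^ 2

lemma eval_trace_u :
    eval ![1, 0, 0, 0] (pd 0 P.matrix * pd 2 P.matrix * pd 3 P.matrix).trace =
      -(15 / 2 * P.rightDimFactor * P.k ^ 29) := by
  rw [pd, pd, pd, matrix, trace_map_flopMatrix (pderiv 0) (pderiv 2) (pderiv 3)]
  · simp [a, b, c, r, p, q, t, x, y, u, Derivation.leibniz_pow, rightDimFactor]
    ring
  all_goals simp [a, b, c, r, p, q, t, x, y, u, Derivation.leibniz_pow]

lemma eval_trace_xy :
    eval ![0, 0, 1, 1] (pd 0 P.matrix * pd 2 P.matrix * pd 3 P.matrix).trace = 15 * P.k := by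
  rw [pd, pd, pd, matrix, trace_map_flopMatrix (pderiv 0) (pderiv 2) (pderiv 3)]
  · simp [a, b, c, r, p, q, t, x, y, u, Derivation.leibniz_pow]
    ring
  all_goals simp [a, b, c, r, p, q, t, x, y, u, Derivation.leibniz_pow]

lemma weight_wt_eq_iff (m : Fin 4 →₀ ℕ) (n : ℕ) :
    Finsupp.weight wt m = n / 15 ↔ m 0 + 15 * m 1 + 10 * m 2 + 6 * m 3 = n := by
  have hweight :
      Finsupp.weight wt m = ((m 0 + 15 * m 1 + 10 * m 2 + 6 * m 3 : ℕ) : ℚ) / 15 := by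
    simp [Finsupp.weight_apply, Finsupp.sum_fintype, Fin.sum_univ_four, wt]
    ring
  rw [hweight, div_left_inj' (by norm_num), Nat.cast_inj]

lemma coeff_trace_u :
    coeff (mon 28 0 0 0) (pd 0 P.matrix * pd 2 P.matrix * pd 3 P.matrix).trace =
      -(15 / 2 * P.rightDimFactor * P.k ^ 29) := by
  rw [← eval_trace_u, eval_eq_coeff_mul_prod P.isWeightedHomogeneous_trace (m := mon 28 0 0 0)]
  · simp [mon]
  · intro m hm hz
    have hdeg := (weight_wt_eq_iff m 28).mp hm
    have h1 := hz 1 rfl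
    have h2 := hz 2 rfl
    have h3 := hz 3 rfl
    ext i
    fin_cases i <;> simp [mon] <;> omega

lemma coeff_trace_xy :
    coeff (mon 0 0 1 3) (pd 0 P.matrix * pd 2 P.matrix * pd 3 P.matrix).trace = 15 * P.k := by
  rw [← eval_trace_xy, eval_eq_coeff_mul_prod P.isWeightedHomogeneous_trace (m := mon 0 0 1 3)]
  · simp [mon, Finsupp.prod_fintype, Fin.prod_univ_four]
  · intro m hm hz
    have hdeg := (weight_wt_eq_iff m 28).mp hm
    have h0 := hz 0 rfl
    have h1 := hz 1 rfl
    ext i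
    fin_cases i <;> simp [mon] <;> omega

-- This is the minimal polynomial of `2 * cos (2 * π / 15)` over `ℚ`.
lemma exists_quartic_root : ∃ ζ : ℂ, ζ ^ 4 - ζ ^ 3 - 4 * ζ ^ 2 + 4 * ζ + 1 = 0 := by
  let f : Polynomial ℂ := .X ^ 4 - .X ^ 3 - 4 * .X ^ 2 + 4 * .X + 1
  have hf : f.degree = 4 := by
    simp only [f]
    compute_degree!
  obtain ⟨ζ, hζ⟩ := IsAlgClosed.exists_root f (by rw [hf]; decide)
  exact ⟨ζ, by simpa [f] using hζ⟩

lemma exists_isE8 : ∃ P : FlopParams, P.IsE8 ∧ P.rightDimFactor ≠ 0 := by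
  obtain ⟨ζ, hζ⟩ := exists_quartic_root
  let α : ℂ := (23 + 104 * ζ - 36 * ζ ^ 2 - 40 * ζ ^ 3) / 24
  let β : ℂ := (-1 - 8 * ζ + 2 * ζ ^ 2 + 4 * ζ ^ 3) / 10
  let δ : ℂ := -3 / 4 - 4 * ζ + ζ ^ 2 + 2 * ζ ^ 3
  let ε : ℂ := -1 / 4 - ζ + ζ ^ 2
  -- As the quartic is irreducible over `ℚ`, what is non-zero modulo it is invertible.
  have hne : 8 * α ^ 3 + ε ^ 2 / 4 - β ^ 5 ≠ 0 := by
    simp only [α, β, ε]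
    grind
  obtain ⟨k, hk⟩ := IsAlgClosed.exists_pow_nat_eq (-(8 * α ^ 3 + ε ^ 2 / 4 - β ^ 5)⁻¹)
    (n := 30) (by norm_num)
  refine ⟨⟨α, β, δ, ε, k⟩, ⟨?_, ?_, ?_, ?_, ?_⟩, ?_⟩
  · simp only [β, δ]
    ring
  · simp only [α, β, δ, ε]
    grind
  · simp only [α, β, δ, ε]
    grind
  · simp only [α, β, δ, ε]
    grind
  · rw [hk, mul_neg, mul_inv_cancel₀ hne]
  · simp only [rightDimFactor, α, β, δ, ε]
    grind

end FlopParams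

theorem stmt6 :
    ∃ d0 d1 : Matrix (Fin 4) (Fin 4) R4,
      d1 * d0 = (x ^ 3 + y ^ 5 - u ^ 30 - v ^ 2) • (1 : Matrix (Fin 4) (Fin 4) R4) ∧
      d0 * d1 = (x ^ 3 + y ^ 5 - u ^ 30 - v ^ 2) • (1 : Matrix (Fin 4) (Fin 4) R4) ∧
      (∃ α β : Fin 4 → ℚ, ∀ i j,
        WHom ![1/15, 1, 2/3, 2/5] (1 + α j - β i) (d1 i j) ∧
        WHom ![1/15, 1, 2/3, 2/5] (1 + β j - α i) (d0 i j)) ∧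
      coeff (mon 28 0 0 0)
        (str (pd 0 (Matrix.fromBlocks 0 d1 d0 0) * pd 1 (Matrix.fromBlocks 0 d1 d0 0)
          * pd 2 (Matrix.fromBlocks 0 d1 d0 0) * pd 3 (Matrix.fromBlocks 0 d1 d0 0))) ≠ 0 ∧
      coeff (mon 0 0 1 3)
        (str (pd 0 (Matrix.fromBlocks 0 d1 d0 0) * pd 1 (Matrix.fromBlocks 0 d1 d0 0)
          * pd 2 (Matrix.fromBlocks 0 d1 d0 0) * pd 3 (Matrix.fromBlocks 0 d1 d0 0))) ≠ 0 := by
  obtain ⟨P, hP, hfactor⟩ := FlopParams.exists_isE8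
  have hsq := hP.matrix_mul_self
  have hφ := P.isGradedMatrix_matrix
  have hv := IsGradedMatrix.smul_one (isWeightedHomogeneous_X ℂ FlopParams.wt 1)
    (flopShift (2 / 3) (2 / 5) (1 / 15))
  refine ⟨P.matrix - v • 1, P.matrix + v • 1, add_smul_one_mul_sub_smul_one hsq v,
    sub_smul_one_mul_add_smul_one hsq v, ⟨_, _, fun i j =>
      ⟨wHom_of_isWeightedHomogeneous (hφ.add hv i j),
        wHom_of_isWeightedHomogeneous (hφ.sub hv i j)⟩⟩, ?_, ?_⟩
  · rw [str_fromBlocks_add_sub P.pd_one_matrix rfl, coeff_neg, coeff_smul, P.coeff_trace_u]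
    simp [hfactor, hP.k_ne_zero]
  · rw [str_fromBlocks_add_sub P.pd_one_matrix rfl, coeff_neg, coeff_smul, P.coeff_trace_xy]
    simp [hP.k_ne_zero]
end
end
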